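/- Let R be a nonzero commutative ring and n ≥ 2. Then there is no g ∈ GL_{2n}(R((u))) satisfying gᵀ·J̃_{2n}·g = c·J̃_{2n} for some c ∈ R((u))^× and g·Λ̃_i = Λ̃_{i+1} for all i ∈ ℤ. (Note that the shifted standard lattice chain (Λ̃_{i+1})_{i∈ℤ} is 'naively self-dual': each dual lattice Λ̃_{i+1}^∨ = Λ̃_{-i-1} is again a member of the chain.) -/

import Mathlib

noncomputable section
namespace Pap

variable (R : Type*) [CommRing R]

/-- `u^m` as a Laurent series. -/
def U (m : ℤ) : LaurentSeries R := HahnSeries.single m 1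

/-- `R[[u]]` as a `R[[u]]`-submodule of `R((u))`. -/
def psRange : Submodule (PowerSeries R) (LaurentSeries R) :=
  LinearMap.range (Algebra.linearMap (PowerSeries R) (LaurentSeries R))

variable (n : ℕ)

/-- `R((u))^n`. -/
abbrev V := Fin n → LaurentSeries R

instance (priority := 10000) : AddCommGroup (V R n) := Pi.addCommGroup
instance (priority := 10000) : Module (PowerSeries R) (V R n) := Pi.module _ _ _
instance (priority := 10000) : Module (LaurentSeries R) (V R n) := Pi.module _ _ _

/-- Multiplication by a Laurent series, as an `R[[u]]`-linear endomorphism of `R((u))^n`. -/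
def smulV (a : LaurentSeries R) : V R n →ₗ[PowerSeries R] V R n where
  toFun x := a • x
  map_add' x y := smul_add a x y
  map_smul' c x := by
    funext i
    simp only [Pi.smul_apply, RingHom.id_apply, smul_eq_mul]
    simp only [Algebra.smul_def]
    ring

/-- Image of a submodule under multiplication by a Laurent series. -/
def scaleL (a : LaurentSeries R) (L : Submodule (PowerSeries R) (V R n)) :
    Submodule (PowerSeries R) (V R n) := L.map (smulV R n a)

/-- The standard lattice `R[[u]]^n`. -/
def stdLat : Submodule (PowerSeries R) (V R n) := Submodule.pi Set.univ fun _ => psRange R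

/-- The quotient `B/(A ∩ B)`; for `A ≤ B` this is `B/A`. -/
abbrev subQuot (A B : Submodule (PowerSeries R) (V R n)) :=
  B ⧸ (A.comap B.subtype)

/-- A lattice in `R((u))^n`. -/
def IsLattice (L : Submodule (PowerSeries R) (V R n)) : Prop :=
  ∃ N : ℕ, scaleL R n (U R N) (stdLat R n) ≤ L ∧ L ≤ scaleL R n (U R (-(N : ℤ))) (stdLat R n) ∧
    Module.Finite R (RestrictScalars R (PowerSeries R)
      (subQuot R n L (scaleL R n (U R (-(N : ℤ))) (stdLat R n)))) ∧
    Module.Projective R (RestrictScalars R (PowerSeries R)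
      (subQuot R n L (scaleL R n (U R (-(N : ℤ))) (stdLat R n))))

/-- Rank one finite locally free module. -/
def RankOne (A : Type*) [CommRing A] (Q : Type*) [AddCommGroup Q] [Module A Q] : Prop :=
  Module.Finite A Q ∧ Module.Projective A Q ∧
    ∀ (P : Ideal A) [P.IsPrime],
      Module.finrank (Localization P.primeCompl) (LocalizedModule P.primeCompl Q) = 1

/-- Exponent of `u` bounding the `t`-th coordinate of the `j`-th standard lattice. -/
def dex (j : ℤ) (t : Fin n) : ℤ := (j - ((t : ℤ) + 1)) / n + 1

/-- The standard lattice chain `Λ̃_j`, `j ∈ ℤ`. -/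
def stdChain (j : ℤ) : Submodule (PowerSeries R) (V R n) :=
  Submodule.span (PowerSeries R)
    (Set.range fun t : Fin n =>
      (fun s => if s = t then U R (-(dex n j t)) else 0 : V R n))

/-- A complete periodic lattice chain in `R((u))^n`. -/
def IsLatticeChain (L : ℤ → Submodule (PowerSeries R) (V R n)) : Prop :=
  (∀ i, IsLattice R n (L i)) ∧ (∀ i, L i ≤ L (i + 1)) ∧
    (∀ i, @RankOne R _ (RestrictScalars R (PowerSeries R) (subQuot R n (L i) (L (i + 1)))) _
      (RestrictScalars.module R (PowerSeries R) (subQuot R n (L i) (L (i + 1))))) ∧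
    (∀ i, L ((n : ℤ) + i) = scaleL R n (U R (-1)) (L i))

/-- The action of an invertible matrix over `R((u))` on `R[[u]]`-submodules of `R((u))^n`. -/
def glLat (g : GL (Fin n) (LaurentSeries R)) (L : Submodule (PowerSeries R) (V R n)) :
    Submodule (PowerSeries R) (V R n) :=
  L.map ((Matrix.mulVecLin (g : Matrix (Fin n) (Fin n) (LaurentSeries R))).restrictScalars
    (PowerSeries R))

/-- The symplectic matrix `J̃_{2n}`. -/
def Jt : Matrix (Fin (2 * n)) (Fin (2 * n)) (LaurentSeries R) :=
  Matrix.of fun i j =>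
    if (i : ℕ) + (j : ℕ) = 2 * n - 1 then (if (i : ℕ) < n then 1 else -1) else 0

end Pap
end

/-!
The standard lattice chain satisfies `Λ̃_j^∨ = Λ̃_{-j}`, and a similitude `g` with multiplier `c`
satisfies `c · (g Λ)^∨ = g (Λ^∨)`. If `g Λ̃_0 = Λ̃_k`, this applied to `Λ = Λ̃_0` reads
`c Λ̃_{-k} = Λ̃_k`. Comparing coordinates, `c R[[u]] = u^{-e} R[[u]]` with the same `e` in every
coordinate, so `Λ̃_k = u^{-e} Λ̃_{-k} = Λ̃_{-k + 2ne}`, whence `k = ne`. In particular `k = 1` is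
impossible for `n ≥ 2`.
-/

namespace Pap

open Matrix

section Submodule

lemma one_div_eq_of_mul_eq_one {A B : Type*} [CommSemiring A] [CommSemiring B] [Algebra A B]
    {I J : Submodule A B} (h : I * J = 1) : 1 / I = J := by
  refine le_antisymm ?_ (Submodule.le_div_iff_mul_le.mpr (mul_comm J I ▸ h.le))
  calc 1 / I = 1 / I * I * J := by rw [mul_assoc, h, mul_one]
    _ ≤ 1 * J := mul_le_mul_left (Submodule.le_div_iff_mul_le.mp le_rfl) J
    _ = J := one_mul J

variable {A ι : Type*} {M : ι → Type*} [Semiring A] [∀ i, AddCommMonoid (M i)]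
  [∀ i, Module A (M i)]

lemma single_mem_pi_univ_iff [DecidableEq ι] {p : ∀ i, Submodule A (M i)} {i : ι} {x : M i} :
    Pi.single i x ∈ Submodule.pi Set.univ p ↔ x ∈ p i := by
  refine ⟨fun h => ?_, fun h => Submodule.le_comap_single_pi p h⟩
  simpa only [Pi.single_eq_same, SetLike.mem_coe] using h i (Set.mem_univ i)

lemma pi_univ_injective :
    Function.Injective fun p : ∀ i, Submodule A (M i) => Submodule.pi Set.univ p := by
  classical
  intro p q h
  ext i x
  rw [← single_mem_pi_univ_iff, ← single_mem_pi_univ_iff (p := q)]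
  exact SetLike.ext_iff.mp h _

end Submodule

section FractionalIdeal

variable {R : Type*} [CommRing R]

lemma U_mul_U (a b : ℤ) : U R a * U R b = U R (a + b) := by
  simp only [U, HahnSeries.single_mul_single, one_mul]

variable (R) in
/-- The fractional ideal `u^m R[[u]]` of `R((u))`. -/
noncomputable def uIdeal (m : ℤ) : Submodule (PowerSeries R) (LaurentSeries R) :=
  Submodule.span (PowerSeries R) {U R m}

lemma uIdeal_zero : uIdeal R 0 = 1 := Submodule.one_eq_span.symm

lemma uIdeal_mul_uIdeal (a b : ℤ) : uIdeal R a * uIdeal R b = uIdeal R (a + b) := by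
  rw [uIdeal, uIdeal, Submodule.span_mul_span, Set.singleton_mul_singleton, U_mul_U, uIdeal]

lemma coeff_eq_zero_of_mem_uIdeal {m k : ℤ} {x : LaurentSeries R} (hx : x ∈ uIdeal R m)
    (hk : k < m) : x.coeff k = 0 := by
  obtain ⟨p, rfl⟩ := Submodule.mem_span_singleton.mp hx
  rw [Algebra.smul_def, LaurentSeries.coe_algebraMap, U, ← sub_add_cancel k m,
    HahnSeries.coeff_mul_single_add, mul_one, PowerSeries.coeff_coe, if_pos (sub_neg.mpr hk)]

lemma uIdeal_injective [Nontrivial R] : Function.Injective (uIdeal R) := by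
  have le_of_eq {a b : ℤ} (h : uIdeal R a = uIdeal R b) : b ≤ a := by
    have hU : U R a ∈ uIdeal R b := h ▸ Submodule.mem_span_singleton_self _
    by_contra! hab
    simpa [U] using coeff_eq_zero_of_mem_uIdeal hU hab
  exact fun a b h => le_antisymm (le_of_eq h.symm) (le_of_eq h)

lemma one_div_uIdeal (m : ℤ) : 1 / uIdeal R m = uIdeal R (-m) :=
  one_div_eq_of_mul_eq_one (by rw [uIdeal_mul_uIdeal, add_neg_cancel, uIdeal_zero])

end FractionalIdeal

section Exponents

variable {N : ℕ}

lemma dex_eq_iff {j d : ℤ} {t : Fin N} :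
    dex N j t = d ↔ (d - 1) * N ≤ j - (t + 1) ∧ j - (t + 1) < d * N := by
  have hN : (0 : ℤ) < N := by exact_mod_cast t.pos
  rw [← Int.le_ediv_iff_mul_le hN, ← Int.ediv_lt_iff_lt_mul hN, dex]
  omega

lemma dex_add_mul (j e : ℤ) (t : Fin N) : dex N (j + N * e) t = dex N j t + e := by
  obtain ⟨hle, hlt⟩ := dex_eq_iff.mp (rfl : dex N j t = _)
  exact dex_eq_iff.mpr ⟨by linarith, by linarith⟩

lemma dex_neg_rev (j : ℤ) (t : Fin N) : dex N (-j) t.rev = -dex N j t := by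
  obtain ⟨hle, hlt⟩ := dex_eq_iff.mp (rfl : dex N j t = _)
  have hrev : ((t.rev : ℕ) : ℤ) = N - (t + 1) := by rw [Fin.val_rev]; omega
  exact dex_eq_iff.mpr ⟨by linarith, by linarith⟩

lemma le_of_dex_le_dex (hN : 0 < N) {i j : ℤ} (h : ∀ t, dex N i t ≤ dex N j t) : i ≤ j := by
  have hN' : (0 : ℤ) < N := by exact_mod_cast hN
  -- the coordinate in which `Λ̃_i` is strictly larger than `Λ̃_{i-1}`
  obtain ⟨t, ht⟩ : ∃ t : Fin N, (t : ℤ) = (i - 1) % N :=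
    ⟨⟨((i - 1) % N).toNat, by have := Int.emod_lt_of_pos (i - 1) hN'; omega⟩,
      Int.toNat_of_nonneg (Int.emod_nonneg _ hN'.ne')⟩
  have hdiv : i - (t + 1) = (i - 1) / N * N := by
    have := Int.emod_add_ediv_mul (i - 1) N
    linarith
  have hi : dex N i t = (i - 1) / N + 1 := dex_eq_iff.mpr ⟨by linarith, by linarith⟩
  obtain ⟨hj, -⟩ := dex_eq_iff.mp (rfl : dex N j t = _)
  have hmul : (i - 1) / N * N ≤ (dex N j t - 1) * N :=
    mul_le_mul_of_nonneg_right (by linarith [h t]) hN'.le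
  linarith

lemma dex_injective (hN : 0 < N) : Function.Injective (dex N) := fun _ _ h =>
  le_antisymm (le_of_dex_le_dex hN fun t => (congrFun h t).le)
    (le_of_dex_le_dex hN fun t => (congrFun h t).ge)

end Exponents

section Lattices

variable {R : Type*} [CommRing R] {N : ℕ}

lemma stdChain_eq_pi (j : ℤ) :
    stdChain R N j = Submodule.pi Set.univ fun t => uIdeal R (-dex N j t) := by
  rw [← Submodule.iSup_map_single, stdChain, Submodule.span_range_eq_iSup]
  refine iSup_congr fun t => ?_
  rw [uIdeal, Submodule.map_span, Set.image_singleton]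
  congr 2
  ext1 s
  simp [Pi.single_apply]

lemma mem_scaleL {c : LaurentSeries R} {L : Submodule (PowerSeries R) (V R N)} {z : V R N} :
    z ∈ scaleL R N c L ↔ ∃ x ∈ L, c • x = z :=
  Iff.rfl

lemma mem_glLat {g : GL (Fin N) (LaurentSeries R)} {L : Submodule (PowerSeries R) (V R N)}
    {z : V R N} : z ∈ glLat R N g L ↔ ∃ x ∈ L, g.1 *ᵥ x = z :=
  Iff.rfl

lemma scaleL_pi (c : LaurentSeries R) (p : Fin N → Submodule (PowerSeries R) (LaurentSeries R)) :
    scaleL R N c (Submodule.pi Set.univ p) =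
      Submodule.pi Set.univ fun t => Submodule.span (PowerSeries R) {c} * p t := by
  ext x
  simp only [mem_scaleL, Submodule.mem_pi, Submodule.mem_span_singleton_mul,
    Set.mem_univ, true_imp_iff]
  constructor
  · rintro ⟨y, hy, rfl⟩ t
    exact ⟨y t, hy t, rfl⟩
  · intro hx
    choose y hy hyx using hx
    exact ⟨y, hy, funext hyx⟩

lemma exists_eq_add_mul_of_scaleL_stdChain [Nontrivial R] (hN : 0 < N) {c : LaurentSeries R}
    {i j : ℤ} (h : scaleL R N c (stdChain R N i) = stdChain R N j) : ∃ e : ℤ, j = i + N * e := by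
  rw [stdChain_eq_pi, stdChain_eq_pi, scaleL_pi] at h
  have hc (t : Fin N) :
      Submodule.span (PowerSeries R) {c} = uIdeal R (dex N i t - dex N j t) := by
    have ht := congrFun (pi_univ_injective h) t
    calc Submodule.span (PowerSeries R) {c}
        = Submodule.span (PowerSeries R) {c} * uIdeal R (-dex N i t) * uIdeal R (dex N i t) := by
          rw [mul_assoc, uIdeal_mul_uIdeal, neg_add_cancel, uIdeal_zero, mul_one]
      _ = uIdeal R (-dex N j t) * uIdeal R (dex N i t) := by rw [ht]
      _ = uIdeal R (dex N i t - dex N j t) := by rw [uIdeal_mul_uIdeal, neg_add_eq_sub]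
  let t₀ : Fin N := ⟨0, hN⟩
  refine ⟨dex N j t₀ - dex N i t₀, dex_injective hN (funext fun t => ?_)⟩
  have ht := uIdeal_injective ((hc t).symm.trans (hc t₀))
  rw [dex_add_mul]
  linarith

end Lattices

section Duality

lemma mulVec_dotProduct_mulVec_of_similitude {S ι : Type*} [CommSemiring S] [Fintype ι]
    {M g : Matrix ι ι S} {c : S} (hg : gᵀ * M * g = c • M) (x y : ι → S) :
    (g *ᵥ x) ⬝ᵥ M *ᵥ (g *ᵥ y) = (c • x) ⬝ᵥ M *ᵥ y := by
  calc (g *ᵥ x) ⬝ᵥ M *ᵥ (g *ᵥ y) = x ⬝ᵥ (gᵀ * M * g) *ᵥ y := by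
        rw [← vecMul_transpose, ← dotProduct_mulVec, mulVec_mulVec, mulVec_mulVec,
          Matrix.mul_assoc]
    _ = (c • x) ⬝ᵥ M *ᵥ y := by rw [hg, smul_mulVec, dotProduct_smul, smul_dotProduct]

variable {R : Type*} [CommRing R] {N : ℕ}

/-- The dual `{x | ⟨x, L⟩ ⊆ R[[u]]}` of `L` for the bilinear form with Gram matrix `M`. The
submodule `1` of `R((u))` is `R[[u]]`. -/
def dualLat (M : Matrix (Fin N) (Fin N) (LaurentSeries R))
    (L : Submodule (PowerSeries R) (V R N)) : Submodule (PowerSeries R) (V R N) where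
  carrier := {x | ∀ y ∈ L, x ⬝ᵥ M *ᵥ y ∈ (1 : Submodule (PowerSeries R) (LaurentSeries R))}
  add_mem' hx hx' y hy := by rw [add_dotProduct]; exact add_mem (hx y hy) (hx' y hy)
  zero_mem' y _ := by rw [zero_dotProduct]; exact zero_mem _
  smul_mem' a x hx y hy := by rw [smul_dotProduct]; exact Submodule.smul_mem _ a (hx y hy)

lemma mem_dualLat {M : Matrix (Fin N) (Fin N) (LaurentSeries R)}
    {L : Submodule (PowerSeries R) (V R N)} {x : V R N} :
    x ∈ dualLat M L ↔
      ∀ y ∈ L, x ⬝ᵥ M *ᵥ y ∈ (1 : Submodule (PowerSeries R) (LaurentSeries R)) :=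
  Iff.rfl

lemma scaleL_dualLat_glLat {M : Matrix (Fin N) (Fin N) (LaurentSeries R)}
    {g : GL (Fin N) (LaurentSeries R)} {c : (LaurentSeries R)ˣ}
    (hg : g.1ᵀ * M * g.1 = (c : LaurentSeries R) • M) (L : Submodule (PowerSeries R) (V R N)) :
    scaleL R N c (dualLat M (glLat R N g L)) = glLat R N g (dualLat M L) := by
  have mem_iff (x : V R N) :
      g.1 *ᵥ x ∈ dualLat M (glLat R N g L) ↔ (c : LaurentSeries R) • x ∈ dualLat M L := by
    simp only [mem_dualLat, mem_glLat, forall_exists_index, and_imp, forall_apply_eq_imp_iff₂,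
      mulVec_dotProduct_mulVec_of_similitude hg]
  ext z
  rw [mem_scaleL, mem_glLat]
  constructor
  · rintro ⟨w, hw, rfl⟩
    obtain ⟨x, rfl⟩ : ∃ x, g.1 *ᵥ x = w :=
      ⟨g⁻¹.1 *ᵥ w, by rw [mulVec_mulVec, Units.mul_inv, one_mulVec]⟩
    exact ⟨(c : LaurentSeries R) • x, (mem_iff x).mp hw, mulVec_smul _ _ _⟩
  · rintro ⟨x, hx, rfl⟩
    obtain ⟨y, rfl⟩ : ∃ y, (c : LaurentSeries R) • y = x := ⟨c⁻¹ • x, smul_inv_smul c x⟩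
    exact ⟨g.1 *ᵥ y, (mem_iff y).mpr hx, (mulVec_smul _ _ _).symm⟩

lemma Jt_mulVec_apply {n : ℕ} (y : V R (2 * n)) (s : Fin (2 * n)) :
    (Jt R n *ᵥ y) s = (if (s : ℕ) < n then 1 else -1) * y s.rev := by
  have hrev (t : Fin (2 * n)) : (s : ℕ) + t = 2 * n - 1 ↔ t = s.rev := by
    rw [Fin.ext_iff, Fin.val_rev]
    omega
  simp only [mulVec, dotProduct, Jt, of_apply, hrev, ite_mul, zero_mul, Finset.sum_ite_eq',
    Finset.mem_univ, if_true]

lemma dualLat_Jt_pi {n : ℕ} (p : Fin (2 * n) → Submodule (PowerSeries R) (LaurentSeries R)) :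
    dualLat (Jt R n) (Submodule.pi Set.univ p) = Submodule.pi Set.univ fun t => 1 / p t.rev := by
  have sign_mul_mem_iff (s : Fin (2 * n)) (a b : LaurentSeries R) :
      a * ((if (s : ℕ) < n then 1 else -1) * b) ∈
        (1 : Submodule (PowerSeries R) (LaurentSeries R)) ↔
      a * b ∈ (1 : Submodule (PowerSeries R) (LaurentSeries R)) := by
    split_ifs
    · rw [one_mul]
    · rw [neg_one_mul, mul_neg, neg_mem_iff]
  ext x
  simp only [Submodule.mem_pi, Set.mem_univ, true_imp_iff, Submodule.mem_div_iff_forall_mul_mem,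
    mem_dualLat]
  constructor
  · intro hx t b hb
    have hxb := hx (Pi.single t.rev b) fun s =>
      single_mem_pi_univ_iff.mpr hb s (Set.mem_univ s)
    rw [dotProduct, Finset.sum_eq_single t] at hxb
    · rwa [Jt_mulVec_apply, sign_mul_mem_iff, Pi.single_eq_same] at hxb
    · intro s _ hst
      rw [Jt_mulVec_apply, Pi.single_eq_of_ne (Fin.rev_injective.ne hst), mul_zero, mul_zero]
    · exact fun ht => absurd (Finset.mem_univ t) ht
  · intro hx y hy
    refine Submodule.sum_mem _ fun s _ => ?_
    rw [Jt_mulVec_apply, sign_mul_mem_iff]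
    exact hx s _ (hy _)

lemma dualLat_stdChain (n : ℕ) (j : ℤ) :
    dualLat (Jt R n) (stdChain R (2 * n) j) = stdChain R (2 * n) (-j) := by
  rw [stdChain_eq_pi, stdChain_eq_pi, dualLat_Jt_pi]
  congr 1 with t : 1
  rw [one_div_uIdeal, ← dex_neg_rev, Fin.rev_rev]

end Duality

end Pap

open Pap Matrix in
theorem stmt18_general {R : Type*} [CommRing R] [Nontrivial R] {n : ℕ} (hn : 0 < n)
    {g : GL (Fin (2 * n)) (LaurentSeries R)} {c : (LaurentSeries R)ˣ}
    (hg : g.1ᵀ * Jt R n * g.1 = (c : LaurentSeries R) • Jt R n) {k : ℤ}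
    (hk : glLat R (2 * n) g (stdChain R (2 * n) 0) = stdChain R (2 * n) k) : (n : ℤ) ∣ k := by
  have hscale : scaleL R (2 * n) c (stdChain R (2 * n) (-k)) = stdChain R (2 * n) k := by
    simpa only [dualLat_stdChain, hk, neg_zero] using
      scaleL_dualLat_glLat hg (stdChain R (2 * n) 0)
  obtain ⟨e, he⟩ := exists_eq_add_mul_of_scaleL_stdChain (by omega) hscale
  push_cast at he
  exact ⟨e, by linarith⟩

open Pap Matrix in
/-- There is no symplectic similitude carrying the standard lattice chain to its shift. -/
theorem stmt18 (R : Type*) [CommRing R] [Nontrivial R] (n : ℕ) (hn : 2 ≤ n) :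
    ¬ ∃ (g : GL (Fin (2 * n)) (LaurentSeries R)) (c : (LaurentSeries R)ˣ),
      ((g : Matrix (Fin (2 * n)) (Fin (2 * n)) (LaurentSeries R))ᵀ * Jt R n *
          (g : Matrix (Fin (2 * n)) (Fin (2 * n)) (LaurentSeries R))
        = (c : LaurentSeries R) • Jt R n) ∧
      ∀ i : ℤ, glLat R (2 * n) g (stdChain R (2 * n) i) = stdChain R (2 * n) (i + 1) := by
  rintro ⟨g, c, hg, hL⟩
  have hdvd : (n : ℤ) ∣ 1 := stmt18_general (by omega) hg (hL 0)
  have := Int.le_of_dvd one_pos hdvd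
  omega
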